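/- Let n ≥ 2, let Ω ⊆ ℝⁿ be open, and let ξ : Ω → ℝ be smooth with ∂ᵢξ(x) ≠ 0 for every i and x ∈ Ω. Let Φ, F : ℝ → ℝ be smooth with (n−2)Φ'(s) + Φ(s)F'(s) ≠ 0 for all s in ξ(Ω). Suppose φ = Φ ∘ ξ and f = F ∘ ξ satisfy the off-diagonal equations: for all i ≠ j, (n−2)∂ᵢ∂ⱼφ + φ·∂ᵢ∂ⱼf + ∂ᵢφ·∂ⱼf + ∂ⱼφ·∂ᵢf = 0 on Ω. Then, defining G : ξ(Ω) → ℝ by G = −[(n−2)Φ'' + ΦF'' + 2Φ'F'] / [(n−2)Φ' + ΦF'], one has ∂ᵢ∂ⱼξ(x) = G(ξ(x))·∂ᵢξ(x)·∂ⱼξ(x) for all i ≠ j and all x ∈ Ω. (Equation (12), the key relation ξ_{,ij}/(ξ_{,i}ξ_{,j}) = F(ξ).) -/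

import Mathlib

/-!
The chain rule gives `∂ⱼ(H ∘ ξ) = H'(ξ) ∂ⱼξ` and
`∂ᵢ∂ⱼ(H ∘ ξ) = H''(ξ) ∂ᵢξ ∂ⱼξ + H'(ξ) ∂ᵢ∂ⱼξ` on `Ω` (`pd_comp`, `pd_pd_comp`). Substituting
`H = Φ` and `H = F` into the off-diagonal equation turns it into
`[(n-2)Φ' + ΦF'] ∂ᵢ∂ⱼξ + [(n-2)Φ'' + ΦF'' + 2Φ'F'] ∂ᵢξ ∂ⱼξ = 0`, and the first bracket is
nonzero on `ξ(Ω)`, so one can solve for `∂ᵢ∂ⱼξ`.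
-/

noncomputable def pd {n : ℕ} (i : Fin n) (u : (Fin n → ℝ) → ℝ) (x : Fin n → ℝ) : ℝ :=
  fderiv ℝ u x (Pi.single i 1)

lemma pd_comp {n : ℕ} {ξ : (Fin n → ℝ) → ℝ} {H : ℝ → ℝ} {x : Fin n → ℝ}
    (hH : DifferentiableAt ℝ H (ξ x)) (hξ : DifferentiableAt ℝ ξ x) (j : Fin n) :
    pd j (H ∘ ξ) x = deriv H (ξ x) * pd j ξ x := by
  have h := hH.hasDerivAt.comp_hasFDerivAt x hξ.hasFDerivAt
  simp [pd, h.fderiv]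

lemma pd_pd_comp {n : ℕ} {Ω : Set (Fin n → ℝ)} (hΩ : IsOpen Ω) {ξ : (Fin n → ℝ) → ℝ}
    (hξ : ContDiffOn ℝ (⊤ : ℕ∞) ξ Ω) {H : ℝ → ℝ} (hH : ContDiff ℝ (⊤ : ℕ∞) H)
    (i j : Fin n) {x : Fin n → ℝ} (hx : x ∈ Ω) :
    pd i (pd j (H ∘ ξ)) x =
      deriv (deriv H) (ξ x) * pd i ξ x * pd j ξ x + deriv H (ξ x) * pd i (pd j ξ) x := by
  have hd : ∀ y ∈ Ω, DifferentiableAt ℝ ξ y := fun y hy =>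
    (hξ.contDiffAt (hΩ.mem_nhds hy)).differentiableAt (by simp)
  have hHd : Differentiable ℝ H := hH.differentiable (by simp)
  have hH' : Differentiable ℝ (deriv H) :=
    (contDiff_infty_iff_deriv.1 hH).2.differentiable (by simp)
  -- The first-order chain rule holds near `x`, so it may be differentiated once more.
  have heq : pd j (H ∘ ξ) =ᶠ[nhds x] fun y => (deriv H ∘ ξ) y * pd j ξ y := by
    filter_upwards [hΩ.mem_nhds hx] with y hy
    exact pd_comp (hHd _) (hd y hy) j
  have hpd : DifferentiableAt ℝ (pd j ξ) x := by
    have h1 : ContDiffAt ℝ 1 (fderiv ℝ ξ) x :=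
      (hξ.contDiffAt (hΩ.mem_nhds hx)).fderiv_right
        (WithTop.coe_le_coe.2 (le_top : (1 + 1 : ℕ∞) ≤ ⊤))
    exact (h1.differentiableAt (by simp)).clm_apply (differentiableAt_const _)
  have hcomp : DifferentiableAt ℝ (deriv H ∘ ξ) x := (hH' _).comp x (hd x hx)
  have h2 := pd_comp (hH' (ξ x)) (hd x hx) i
  have h3 : pd i (pd j (H ∘ ξ)) x =
      (deriv H ∘ ξ) x * pd i (pd j ξ) x + pd j ξ x * pd i (deriv H ∘ ξ) x := by
    unfold pd at heq hpd ⊢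
    rw [heq.fderiv_eq, fderiv_fun_mul hcomp hpd]
    simp
  rw [h3, h2, Function.comp_apply]
  ring

/-- **Equation (12)** in the proof of Theorem 1.1: the off-diagonal soliton equations
force `ξ_{,ij} = G(ξ)·ξ_{,i}·ξ_{,j}` with
`G = −[(n−2)Φ'' + ΦF'' + 2Φ'F'] / [(n−2)Φ' + ΦF']`. -/
theorem stmt_6 (n : ℕ) (hn : 2 ≤ n) (ε : Fin n → ℝ)
    (hε : ∀ k, ε k = 1 ∨ ε k = -1)
    (Ω : Set (Fin n → ℝ)) (hΩ : IsOpen Ω)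
    (ξ : (Fin n → ℝ) → ℝ) (hξ : ContDiffOn ℝ (⊤ : ℕ∞) ξ Ω)
    (hξ' : ∀ i : Fin n, ∀ x ∈ Ω, pd i ξ x ≠ 0)
    (Φ F : ℝ → ℝ) (hΦ : ContDiff ℝ (⊤ : ℕ∞) Φ) (hF : ContDiff ℝ (⊤ : ℕ∞) F)
    (hnd : ∀ s ∈ ξ '' Ω, ((n : ℝ) - 2) * deriv Φ s + Φ s * deriv F s ≠ 0)
    (hoff : ∀ i j : Fin n, i ≠ j → ∀ x ∈ Ω,
      ((n : ℝ) - 2) * pd i (pd j (Φ ∘ ξ)) x + (Φ ∘ ξ) x * pd i (pd j (F ∘ ξ)) x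
        + pd i (Φ ∘ ξ) x * pd j (F ∘ ξ) x + pd j (Φ ∘ ξ) x * pd i (F ∘ ξ) x = 0) :
    ∀ i j : Fin n, i ≠ j → ∀ x ∈ Ω,
      pd i (pd j ξ) x =
        (-(((n : ℝ) - 2) * deriv (deriv Φ) (ξ x) + Φ (ξ x) * deriv (deriv F) (ξ x)
            + 2 * deriv Φ (ξ x) * deriv F (ξ x)) /
          (((n : ℝ) - 2) * deriv Φ (ξ x) + Φ (ξ x) * deriv F (ξ x)))
        * pd i ξ x * pd j ξ x := by
  intro i j hij x hx
  have h := hoff i j hij x hx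
  have hd : DifferentiableAt ℝ ξ x :=
    (hξ.contDiffAt (hΩ.mem_nhds hx)).differentiableAt (by simp)
  have hΦd : DifferentiableAt ℝ Φ (ξ x) := hΦ.differentiable (by simp) _
  have hFd : DifferentiableAt ℝ F (ξ x) := hF.differentiable (by simp) _
  rw [pd_pd_comp hΩ hξ hΦ i j hx, pd_pd_comp hΩ hξ hF i j hx, pd_comp hΦd hd, pd_comp hΦd hd,
    pd_comp hFd hd, pd_comp hFd hd, Function.comp_apply] at h
  have hne := hnd (ξ x) ⟨x, hx, rfl⟩
  rw [mul_assoc, div_mul_eq_mul_div, eq_div_iff hne]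
  linear_combination h
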